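/- Let α and β be real numbers with 0 < α < 1 and 0 < β < 1. For real y > 2, define F(y) as the value of the continued fraction (y²−1)/2 + K_{m=1}^∞(a_m/b_m(y)), where for m ≥ 1: a_{2m} = (2m−2+α+β)(2m−1−α)(2m−1−β)/4, a_{2m−1} = (2m−α−β)(2m−1+α)(2m−1+β)/4, b_{2m}(y) = y²−1, b_{2m−1}(y) = 2m−1. Then for every real x > 2, the continued fractions defining F(x) and F(x+2) converge to positive real values, and F(x)/F(x+2) = (x+α)(x+1−α−β)(x+β) / [(x+2−α)(x+1+α+β)(x+2−β)]. -/

import Mathlib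

open Filter

noncomputable def cfA (a b : ℕ → ℝ) : ℕ → ℝ
  | 0 => 1
  | 1 => b 0
  | n + 2 => b (n + 1) * cfA a b (n + 1) + a (n + 1) * cfA a b n

noncomputable def cfB (a b : ℕ → ℝ) : ℕ → ℝ
  | 0 => 0
  | 1 => 1
  | n + 2 => b (n + 1) * cfB a b (n + 1) + a (n + 1) * cfB a b n

/-- The continued fraction `b 0 + K_{n=1}^∞ (a n / b n)` converges to `v`. -/
def CFConvergesTo (a b : ℕ → ℝ) (v : ℝ) : Prop :=
  (∀ᶠ n in atTop, cfB a b n ≠ 0) ∧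
    Tendsto (fun n => cfA a b n / cfB a b n) atTop (nhds v)
/-- `a_{2m} = (2m−2+α+β)(2m−1−α)(2m−1−β)/4`, `a_{2m−1} = (2m−α−β)(2m−1+α)(2m−1+β)/4`. -/
noncomputable def aSeq (α β : ℝ) : ℕ → ℝ := fun n =>
  if n % 2 = 0 then
    ((n : ℝ) - 2 + α + β) * ((n : ℝ) - 1 - α) * ((n : ℝ) - 1 - β) / 4
  else
    ((n : ℝ) + 1 - α - β) * ((n : ℝ) + α) * ((n : ℝ) + β) / 4

/-- `b_0 = (y²−1)/2`, `b_{2m}(y) = y²−1`, `b_{2m−1}(y) = 2m−1`. -/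
noncomputable def bSeq (y : ℝ) : ℕ → ℝ := fun n =>
  if n = 0 then (y ^ 2 - 1) / 2 else if n % 2 = 0 then y ^ 2 - 1 else (n : ℝ)

lemma cfB_pos (a b : ℕ → ℝ) (ha : ∀ n, 0 < a (n + 1)) (hb : ∀ n, 0 < b n) (n : ℕ) :
    0 ≤ cfB a b n ∧ 0 < cfB a b (n + 1) := by
  induction n with
  | zero => simp [cfB]
  | succ k ih =>
    refine ⟨ih.2.le, ?_⟩
    rw [cfB]
    have h1 := mul_pos (hb (k + 1)) ih.2
    have h2 := mul_nonneg (ha k).le ih.1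
    linarith

lemma cfA_ge (a b : ℕ → ℝ) (ha : ∀ n, 0 < a (n + 1)) (hb : ∀ n, 0 < b n) (n : ℕ) :
    b 0 * cfB a b n ≤ cfA a b n ∧ b 0 * cfB a b (n + 1) ≤ cfA a b (n + 1) := by
  induction n with
  | zero => simp [cfB, cfA]
  | succ k ih =>
    refine ⟨ih.2, ?_⟩
    rw [cfB, cfA]
    have h1 := mul_le_mul_of_nonneg_left ih.2 (hb (k + 1)).le
    have h2 := mul_le_mul_of_nonneg_left ih.1 (ha k).le
    linarith

/-- A nonnegative antitone sequence losing a harmonic proportion tends to zero. -/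
lemma tendsto_zero_of_harmonic (Q : ℕ → ℝ) (hQ : Antitone Q) (h0 : ∀ n, 0 ≤ Q n)
    (h : ∀ i : ℕ, Q (i + 2) * (1 + 1 / ((i : ℝ) + 1)) ≤ Q i) : Tendsto Q atTop (nhds 0) := by
  have hbdd : BddBelow (Set.range Q) := ⟨0, by rintro _ ⟨n, rfl⟩; exact h0 n⟩
  have hlim := tendsto_atTop_ciInf hQ hbdd
  set L := ⨅ i, Q i with hL
  have hLle : ∀ n, L ≤ Q n := fun n => ciInf_le hbdd n
  have hL0 : 0 ≤ L := le_ciInf h0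
  rcases hL0.eq_or_lt with h1 | h1
  · rw [h1]; exact hlim
  exfalso
  have hsum : ∀ N : ℕ, L / 2 * ∑ k ∈ Finset.range N, 1 / ((k : ℝ) + 1) ≤ Q 0 - Q (2 * N) := by
    intro N
    induction N with
    | zero => simp
    | succ k ih =>
      rw [Finset.sum_range_succ, mul_add]
      have h2 := h (2 * k)
      have h3 := hLle (2 * k + 2)
      have h4 : L / 2 * (1 / ((k : ℝ) + 1)) ≤ Q (2 * k + 2) * (1 / (((2 * k : ℕ) : ℝ) + 1)) := by
        have : L / 2 * (1 / ((k : ℝ) + 1)) = L * (1 / (2 * (k : ℝ) + 2)) := by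
          field_simp
        rw [this]
        push_cast
        have h5 : (1 / (2 * (k : ℝ) + 2)) ≤ 1 / (2 * (k : ℝ) + 1) := by
          apply one_div_le_one_div_of_le <;> first | positivity | linarith
        exact mul_le_mul h3 h5 (by positivity) (h0 _)
      have h6 : 2 * (k + 1) = 2 * k + 2 := by ring
      rw [h6]
      linarith
  have hdiv := Real.tendsto_sum_range_one_div_nat_succ_atTop
  obtain ⟨N, hN⟩ := (hdiv.eventually (eventually_gt_atTop (Q 0 / (L / 2)))).exists
  have h2 := hsum N
  rw [div_lt_iff₀ (by positivity)] at hN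
  have := h0 (2 * N)
  linarith

lemma cf_converges (a b : ℕ → ℝ) (ha : ∀ n, 0 < a (n + 1)) (hb : ∀ n, 0 < b n)
    (hab : ∀ i : ℕ, a (i + 3) ≤ 4 * ((i : ℝ) + 1) ^ 2 * (b (i + 2) * b (i + 3))) :
    ∃ v, CFConvergesTo a b v ∧ 0 < v := by
  have hB : ∀ n, 0 < cfB a b (n + 1) := fun n => (cfB_pos a b ha hb n).2
  have hBr : ∀ n, cfB a b (n + 2) = b (n + 1) * cfB a b (n + 1) + a (n + 1) * cfB a b n :=
    fun n => by rw [cfB]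
  have hAr : ∀ n, cfA a b (n + 2) = b (n + 1) * cfA a b (n + 1) + a (n + 1) * cfA a b n :=
    fun n => by rw [cfA]
  set A := cfA a b with hA_def
  set B := cfB a b with hB_def
  let E : ℕ → ℝ := fun i => (-1) ^ i * (A (i + 2) * B (i + 1) - A (i + 1) * B (i + 2))
  have hEs : ∀ i, E (i + 1) = a (i + 2) * E i := by
    intro i
    simp only [E]
    rw [hAr (i + 1), hBr (i + 1), pow_succ]
    ring
  have hE0 : E 0 = a 1 := by
    simp [E, hA_def, hB_def, cfA, cfB]
    ring
  have hE : ∀ i, 0 < E i := by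
    intro i
    induction i with
    | zero => rw [hE0]; exact ha 0
    | succ k ih => rw [hEs]; exact mul_pos (ha (k + 1)) ih
  let Q : ℕ → ℝ := fun i => E i / (B (i + 1) * B (i + 2))
  have hQ0 : ∀ i, 0 ≤ Q i := fun i => (div_pos (hE i) (mul_pos (hB i) (hB (i + 1)))).le
  have hQanti : Antitone Q := by
    apply antitone_nat_of_succ_le
    intro i
    simp only [Q]
    rw [hEs, div_le_div_iff₀ (mul_pos (hB (i + 1)) (hB (i + 2))) (mul_pos (hB i) (hB (i + 1)))]
    have h1 : a (i + 2) * B (i + 1) ≤ B (i + 3) := by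
      rw [hBr (i + 1)]
      have := mul_pos (hb (i + 2)) (hB (i + 1))
      linarith
    have h2 := mul_le_mul_of_nonneg_left h1 (mul_pos (hE i) (hB (i + 1))).le
    calc _ = E i * B (i + 1 + 1) * (a (i + 2) * B (i + 1)) := by ring
      _ ≤ _ := h2
      _ = _ := by ring
  have hQh : ∀ i : ℕ, Q (i + 2) * (1 + 1 / ((i : ℝ) + 1)) ≤ Q i := by
    intro i
    simp only [Q]
    rw [hEs, hEs]
    have e3 := hBr (i + 1)
    have e4 := hBr (i + 2)
    have p1 := hB i
    have p2 := hB (i + 1)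
    have p3 := hB (i + 2)
    have p4 := hB (i + 3)
    have pa := ha (i + 1)
    have pa' := ha (i + 2)
    have pb := hb (i + 2)
    have pb' := hb (i + 3)
    have hh := hab i
    have pE := hE i
    simp only [add_assoc, Nat.reduceAdd] at *
    generalize B (i + 1) = B1 at *
    generalize B (i + 2) = B2 at *
    generalize B (i + 3) = B3 at *
    generalize B (i + 4) = B4 at *
    generalize a (i + 2) = a2 at *
    generalize a (i + 3) = a3 at *
    generalize b (i + 2) = b2 at *
    generalize b (i + 3) = b3 at *
    generalize E i = e at *
    have hn : (0 : ℝ) < (i : ℝ) + 1 := by positivity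
    generalize (i : ℝ) + 1 = n at *
    -- AM-GM
    have key : a3 * (a2 * B1) * B2 ≤ n * (b2 * a3 * B2 ^ 2 + b3 * (a2 * B1) ^ 2) := by
      generalize a2 * B1 = u at *
      have h1 : 0 ≤ (2 * n * b3 * u - a3 * B2) ^ 2 := sq_nonneg _
      have h2 : a3 * (a3 * B2 ^ 2) ≤ 4 * n ^ 2 * (b2 * b3) * (a3 * B2 ^ 2) :=
        mul_le_mul_of_nonneg_right hh (by positivity)
      have h3 : 0 ≤ (4 * n * b3) * (n * (b2 * a3 * B2 ^ 2 + b3 * u ^ 2) - a3 * u * B2) := by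
        nlinarith
      have h4 := nonneg_of_mul_nonneg_right h3 (by positivity)
      linarith
    have key2 : a3 * a2 * B1 * B2 * (n + 1) ≤ n * (B3 * B4) := by
      have h5 : B3 * B4 = a3 * a2 * B1 * B2 + (b2 * a3 * B2 ^ 2 + b3 * (a2 * B1) ^ 2)
          + (b3 * b2 ^ 2 * B2 ^ 2 + 2 * b2 * b3 * B2 * (a2 * B1)) := by
        rw [e4, e3]; ring
      have h6 : 0 ≤ n * (b3 * b2 ^ 2 * B2 ^ 2 + 2 * b2 * b3 * B2 * (a2 * B1)) := by positivity
      rw [h5]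
      linarith
    have e1 : a3 * (a2 * e) / (B3 * B4) * (1 + 1 / n) = a3 * a2 * e * (n + 1) / (B3 * B4 * n) := by
      field_simp
    rw [e1, div_le_div_iff₀ (by positivity) (by positivity)]
    have := mul_le_mul_of_nonneg_left key2 pE.le
    linarith
  have hQlim := tendsto_zero_of_harmonic Q hQanti hQ0 hQh
  obtain ⟨l, hl⟩ := hQanti.tendsto_alternating_series_of_tendsto_zero hQlim
  have hf : ∀ n, A (n + 1) / B (n + 1) = A 1 / B 1 + ∑ i ∈ Finset.range n, (-1) ^ i * Q i := by
    intro n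
    induction n with
    | zero => simp
    | succ k ih =>
      rw [Finset.sum_range_succ, ← add_assoc, ← ih]
      simp only [Q, E]
      have p1 := (hB k).ne'
      have p2 := (hB (k + 1)).ne'
      have hs : ((-1 : ℝ) ^ k) * (-1) ^ k = 1 := by
        rw [← mul_pow, neg_one_mul, neg_neg, one_pow]
      have : (-1 : ℝ) ^ k * ((-1) ^ k * (A (k + 2) * B (k + 1) - A (k + 1) * B (k + 2)) /
          (B (k + 1) * B (k + 2))) = (A (k + 2) * B (k + 1) - A (k + 1) * B (k + 2)) /
          (B (k + 1) * B (k + 2)) := by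
        rw [← mul_div_assoc, ← mul_assoc, hs, one_mul]
      rw [this, show k + 1 + 1 = k + 2 from rfl]
      rw [show k + 1 + 1 = k + 2 from rfl] at p2
      clear this hs ih hl hQlim hQh hQanti hQ0 hab
      field_simp
      ring
  have hlim : Tendsto (fun n => A n / B n) atTop (nhds (A 1 / B 1 + l)) := by
    rw [← tendsto_add_atTop_iff_nat 1]
    rw [show (fun n => A (n + 1) / B (n + 1)) = _ from funext hf]
    exact tendsto_const_nhds.add hl
  refine ⟨A 1 / B 1 + l, ⟨?_, hlim⟩, ?_⟩
  · filter_upwards [eventually_ge_atTop 1] with n hn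
    obtain ⟨k, rfl⟩ := Nat.exists_eq_add_of_le' hn
    exact (hB k).ne'
  · have : b 0 ≤ A 1 / B 1 + l := by
      apply ge_of_tendsto hlim
      filter_upwards [eventually_ge_atTop 1] with n hn
      obtain ⟨k, rfl⟩ := Nat.exists_eq_add_of_le' hn
      rw [le_div_iff₀ (hB k)]
      exact (cfA_ge a b ha hb k).2
    exact lt_of_lt_of_le (hb 0) this

lemma aSeq_even (α β : ℝ) (m : ℕ) : aSeq α β (2 * m + 2) =
    (2 * (m : ℝ) + α + β) * (2 * m + 1 - α) * (2 * m + 1 - β) / 4 := by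
  have : (2 * m + 2) % 2 = 0 := by omega
  simp only [aSeq, this, if_true]
  push_cast
  ring

lemma aSeq_odd (α β : ℝ) (m : ℕ) : aSeq α β (2 * m + 1) =
    (2 * (m : ℝ) + 2 - α - β) * (2 * m + 1 + α) * (2 * m + 1 + β) / 4 := by
  have : ¬ (2 * m + 1) % 2 = 0 := by omega
  simp only [aSeq, this, if_false]
  push_cast
  ring

lemma bSeq_even (y : ℝ) (m : ℕ) : bSeq y (2 * m + 2) = y ^ 2 - 1 := by
  have : (2 * m + 2) % 2 = 0 := by omega
  simp [bSeq]

lemma bSeq_odd (y : ℝ) (m : ℕ) : bSeq y (2 * m + 1) = 2 * (m : ℝ) + 1 := by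
  have : ¬ (2 * m + 1) % 2 = 0 := by omega
  simp [bSeq]

lemma aSeq_pos (α β : ℝ) (hα0 : 0 < α) (hα1 : α < 1) (hβ0 : 0 < β) (hβ1 : β < 1) :
    ∀ n, 0 < aSeq α β (n + 1) := by
  intro n
  obtain ⟨m, rfl | rfl⟩ := Nat.even_or_odd' n
  · rw [aSeq_odd]
    have hm : (0 : ℝ) ≤ m := by positivity
    have h1 : 0 < 2 * (m : ℝ) + 2 - α - β := by linarith
    positivity
  · rw [show 2 * m + 1 + 1 = 2 * m + 2 by ring, aSeq_even]
    have hm : (0 : ℝ) ≤ m := by positivity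
    have h1 : 0 < 2 * (m : ℝ) + 1 - α := by linarith
    have h2 : 0 < 2 * (m : ℝ) + 1 - β := by linarith
    positivity

lemma bSeq_pos (y : ℝ) (hy : 2 < y) : ∀ n, 0 < bSeq y n := by
  have hy2 : 3 < y ^ 2 - 1 := by nlinarith
  intro n
  obtain ⟨m, rfl | rfl⟩ := Nat.even_or_odd' n
  · cases m with
    | zero => simp only [bSeq, Nat.mul_zero, if_true]; linarith
    | succ k => rw [show 2 * (k + 1) = 2 * k + 2 by ring, bSeq_even]; linarith
  · rw [bSeq_odd]; positivity

lemma conv (α β : ℝ) (hα0 : 0 < α) (hα1 : α < 1) (hβ0 : 0 < β) (hβ1 : β < 1)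
    (y : ℝ) (hy : 2 < y) : ∃ v, CFConvergesTo (aSeq α β) (bSeq y) v ∧ 0 < v := by
  have hy2 : 3 < y ^ 2 - 1 := by nlinarith
  apply cf_converges
  · exact aSeq_pos α β hα0 hα1 hβ0 hβ1
  · exact bSeq_pos y hy
  · intro i
    have hi : (0 : ℝ) ≤ i := by positivity
    have hA : aSeq α β (i + 3) ≤ ((i : ℝ) + 4) * (i + 4) * (i + 4) / 4 := by
      obtain ⟨m, rfl | rfl⟩ := Nat.even_or_odd' i
      · rw [show 2 * m + 3 = 2 * (m + 1) + 1 by ring, aSeq_odd]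
        push_cast at *
        have hm : (0 : ℝ) ≤ m := by positivity
        have hd : (0 : ℝ) ≤ 4⁻¹ := by norm_num
        rw [div_eq_mul_inv, div_eq_mul_inv]
        refine mul_le_mul_of_nonneg_right (mul_le_mul (mul_le_mul ?_ ?_ ?_ ?_) ?_ ?_ ?_) hd <;>
          first | linarith | positivity
      · rw [show 2 * m + 1 + 3 = 2 * (m + 1) + 2 by ring, aSeq_even]
        push_cast at *
        have hm : (0 : ℝ) ≤ m := by positivity
        have hd : (0 : ℝ) ≤ 4⁻¹ := by norm_num
        rw [div_eq_mul_inv, div_eq_mul_inv]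
        refine mul_le_mul_of_nonneg_right (mul_le_mul (mul_le_mul ?_ ?_ ?_ ?_) ?_ ?_ ?_) hd <;>
          first | linarith | positivity
    have hBB : 3 * ((i : ℝ) + 2) ≤ bSeq y (i + 2) * bSeq y (i + 3) := by
      obtain ⟨m, rfl | rfl⟩ := Nat.even_or_odd' i
      · rw [show 2 * m + 3 = 2 * (m + 1) + 1 by ring, bSeq_odd, bSeq_even]
        push_cast at *
        nlinarith
      · rw [show 2 * m + 1 + 3 = 2 * (m + 1) + 2 by ring,
          show 2 * m + 1 + 2 = 2 * (m + 1) + 1 by ring, bSeq_odd, bSeq_even]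
        push_cast at *
        nlinarith
    have h1 : 4 * ((i : ℝ) + 1) ^ 2 * (3 * ((i : ℝ) + 2)) ≤
        4 * ((i : ℝ) + 1) ^ 2 * (bSeq y (i + 2) * bSeq y (i + 3)) :=
      mul_le_mul_of_nonneg_left hBB (by positivity)
    refine hA.trans (le_trans ?_ h1)
    nlinarith [mul_nonneg hi hi, mul_nonneg (mul_nonneg hi hi) hi]

/-- The gauge (Bauer–Muir) relation between solutions of the recurrences at `x` and `x + 2`. -/
lemma cf_gauge (α β x κ : ℝ) (U V : ℕ → ℝ)
    (hU : ∀ n, U (n + 2) = bSeq x (n + 1) * U (n + 1) + aSeq α β (n + 1) * U n)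
    (hV : ∀ n, V (n + 2) = bSeq (x + 2) (n + 1) * V (n + 1) + aSeq α β (n + 1) * V n)
    (p q : ℝ) (hp : p = (x + α) * (x + 1 - α - β) * (x + β))
    (hq : q = (x + 2 - α) * (x + 1 + α + β) * (x + 2 - β))
    (h1 : κ * V 1 = q * U 1 + (2 - α - β) * (1 + α) * (1 + β) * (x + 1) ^ 2 * U 0)
    (h0 : κ * V 0 = p * U 0) (m : ℕ) :
    κ * V (2 * m + 1) = (4 * (x + 1) ^ 2 * (2 * m + 1) + (2 * (x + 1) * ((2 * m + 1) ^ 2 - 1)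
        - 2 * (x + 1) ^ 2 * (2 * m + 2) + q)) * U (2 * m + 1)
        + (2 * (m : ℝ) + 2 - α - β) * (2 * m + 1 + α) * (2 * m + 1 + β) * (x + 1) ^ 2 * U (2 * m)
    ∧ κ * V (2 * m) = 8 * m * U (2 * m + 1)
        + (8 * (x + 1) * m ^ 2 - 4 * (x ^ 2 - 1) * m + p) * U (2 * m) := by
  induction m with
  | zero =>
    constructor
    · simp only [Nat.mul_zero, Nat.zero_add, Nat.cast_zero]
      rw [h1]; ring
    · simp only [Nat.mul_zero, Nat.zero_add, Nat.cast_zero]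
      rw [h0]; ring
  | succ m ih =>
    obtain ⟨i1, i0⟩ := ih
    have u2 := hU (2 * m)
    have u3 := hU (2 * m + 1)
    have v2 := hV (2 * m)
    have v3 := hV (2 * m + 1)
    rw [show 2 * m + 1 + 2 = 2 * m + 3 by ring, show 2 * m + 1 + 1 = 2 * m + 2 by ring,
      bSeq_even, aSeq_even] at u3 v3
    rw [bSeq_odd, aSeq_odd] at u2 v2
    rw [show 2 * (m + 1) + 1 = 2 * m + 3 by ring, show 2 * (m + 1) = 2 * m + 2 by ring]
    have w2 : κ * V (2 * m + 2) = (2 * (m : ℝ) + 1) * (κ * V (2 * m + 1)) +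
      (2 * (m : ℝ) + 2 - α - β) * (2 * m + 1 + α) * (2 * m + 1 + β) / 4 * (κ * V (2 * m)) := by
      rw [v2]; ring
    have w3 : κ * V (2 * m + 3) = ((x + 2) ^ 2 - 1) * (κ * V (2 * m + 2)) +
      (2 * (m : ℝ) + α + β) * (2 * m + 1 - α) * (2 * m + 1 - β) / 4 * (κ * V (2 * m + 1)) := by
      rw [v3]; ring
    rw [w3, w2, i1, i0, u3, u2, hp, hq]
    push_cast
    constructor <;> ring

theorem stmt15 (α β : ℝ) (hα0 : 0 < α) (hα1 : α < 1) (hβ0 : 0 < β) (hβ1 : β < 1)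
    (x : ℝ) (hx : 2 < x) :
    ∃ F1 F2 : ℝ, CFConvergesTo (aSeq α β) (bSeq x) F1 ∧ 0 < F1 ∧
      CFConvergesTo (aSeq α β) (bSeq (x + 2)) F2 ∧ 0 < F2 ∧
      F1 / F2 = (x + α) * (x + 1 - α - β) * (x + β) /
        ((x + 2 - α) * (x + 1 + α + β) * (x + 2 - β)) := by
  obtain ⟨F1, hF1, hF1p⟩ := conv α β hα0 hα1 hβ0 hβ1 x hx
  obtain ⟨F2, hF2, hF2p⟩ := conv α β hα0 hα1 hβ0 hβ1 (x + 2) (by linarith)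
  refine ⟨F1, F2, hF1, hF1p, hF2, hF2p, ?_⟩
  set p := (x + α) * (x + 1 - α - β) * (x + β) with hp
  set q := (x + 2 - α) * (x + 1 + α + β) * (x + 2 - β) with hq
  have hpp : 0 < p := mul_pos (mul_pos (by linarith) (by linarith)) (by linarith)
  have hqp : 0 < q := mul_pos (mul_pos (by linarith) (by linarith)) (by linarith)
  have gA := cf_gauge α β x p (cfA (aSeq α β) (bSeq x)) (cfA (aSeq α β) (bSeq (x + 2)))
    (fun n => by rw [cfA]) (fun n => by rw [cfA]) p q hp hq
    (by simp only [cfA, bSeq, if_true]; rw [hp, hq]; ring) (by simp [cfA])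
  have gB := cf_gauge α β x q (cfB (aSeq α β) (bSeq x)) (cfB (aSeq α β) (bSeq (x + 2)))
    (fun n => by rw [cfB]) (fun n => by rw [cfB]) p q hp hq
    (by simp [cfB]) (by simp [cfB])
  have hBp : ∀ y, 2 < y → ∀ n, 0 < cfB (aSeq α β) (bSeq y) (n + 1) := fun y hy n =>
    (cfB_pos _ _ (aSeq_pos α β hα0 hα1 hβ0 hβ1) (bSeq_pos y hy) n).2
  set A := cfA (aSeq α β) (bSeq x)
  set B := cfB (aSeq α β) (bSeq x)
  set A' := cfA (aSeq α β) (bSeq (x + 2))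
  set B' := cfB (aSeq α β) (bSeq (x + 2))
  have hdbl : Tendsto (fun m : ℕ => 2 * m) atTop atTop :=
    tendsto_atTop_mono (fun m => by simp only [id]; omega) tendsto_id
  have hdbl1 : Tendsto (fun m : ℕ => 2 * m + 1) atTop atTop :=
    tendsto_atTop_mono (fun m => by simp only [id]; omega) tendsto_id
  have lim2 : Tendsto (fun m : ℕ => p * (A' (2 * m) / B' (2 * m))) atTop (nhds (p * F2)) :=
    (hF2.2.comp hdbl).const_mul p
  have l0 : Tendsto (fun m : ℕ => A (2 * m) / B (2 * m)) atTop (nhds F1) := hF1.2.comp hdbl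
  have l1 : Tendsto (fun m : ℕ => A (2 * m + 1) / B (2 * m + 1)) atTop (nhds F1) :=
    hF1.2.comp hdbl1
  have hg : ∀ᶠ m : ℕ in atTop, 0 < B (2 * m) ∧ 0 < B (2 * m + 1) ∧ 0 < B' (2 * m) ∧
      0 ≤ 8 * (x + 1) * (m : ℝ) ^ 2 - 4 * (x ^ 2 - 1) * m + p := by
    filter_upwards [eventually_ge_atTop 1, eventually_ge_atTop ⌈x⌉₊] with m hm hmx
    obtain ⟨k, rfl⟩ := Nat.exists_eq_add_of_le' hm
    refine ⟨hBp x hx (2 * k + 1), hBp x hx (2 * k + 2), hBp (x + 2) (by linarith) (2 * k + 1), ?_⟩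
    have h1 : x ≤ ((k + 1 : ℕ) : ℝ) := Nat.ceil_le.mp hmx
    generalize ((k + 1 : ℕ) : ℝ) = t at *
    have h2 : 0 ≤ 4 * (x + 1) * t * (2 * t - (x - 1)) :=
      mul_nonneg (mul_nonneg (by linarith) (by linarith)) (by linarith)
    nlinarith
  have up : p * F2 ≤ q * F1 := by
    have : p * F2 / q ≤ F1 := by
      refine le_of_forall_gt_imp_ge_of_dense fun c hc => ?_
      rw [div_le_iff₀ hqp]
      apply le_of_tendsto lim2
      filter_upwards [hg, l0.eventually (eventually_lt_nhds hc),
        l1.eventually (eventually_lt_nhds hc)] with m ⟨b0, b1, b2, hh⟩ h0 h1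
      rw [div_lt_iff₀ b0] at h0
      rw [div_lt_iff₀ b1] at h1
      rw [← mul_div_assoc, div_le_iff₀ b2]
      have e1 := (gA m).2
      have e2 := (gB m).2
      have hm : (0 : ℝ) ≤ 8 * m := by positivity
      have k0 := mul_le_mul_of_nonneg_left h0.le hh
      have k1 := mul_le_mul_of_nonneg_left h1.le hm
      rw [mul_assoc c, e1, e2]
      linarith
    rw [div_le_iff₀ hqp] at this
    linarith
  have dn : q * F1 ≤ p * F2 := by
    have : F1 ≤ p * F2 / q := by
      refine le_of_forall_lt_imp_le_of_dense fun c hc => ?_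
      rw [le_div_iff₀ hqp]
      apply ge_of_tendsto lim2
      filter_upwards [hg, l0.eventually (eventually_gt_nhds hc),
        l1.eventually (eventually_gt_nhds hc)] with m ⟨b0, b1, b2, hh⟩ h0 h1
      rw [lt_div_iff₀ b0] at h0
      rw [lt_div_iff₀ b1] at h1
      rw [← mul_div_assoc, le_div_iff₀ b2]
      have e1 := (gA m).2
      have e2 := (gB m).2
      have hm : (0 : ℝ) ≤ 8 * m := by positivity
      have k0 := mul_le_mul_of_nonneg_left h0.le hh
      have k1 := mul_le_mul_of_nonneg_left h1.le hm
      rw [mul_assoc c, e1, e2]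
      linarith
    rw [le_div_iff₀ hqp] at this
    linarith
  rw [div_eq_div_iff hF2p.ne' hqp.ne']
  linarith
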